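/- Let (X,ν) be a ternary algebra satisfying (T1) ν(a,a,x) = ν(a,x,a) = a, (T2) ν(a,x,b) = ν(b,x,a), and the finite interval chain condition, and let d_ν be the induced metric. Then the metric d_ν is quasi-geodesic if and only if the ternary algebra (X,ν) is quasi-geodesic, i.e. there exist constants L, C > 0 such that for any a,b ∈ X there is a chain a = y₀, y₁, …, y_n = b with card [y_j, y_{j+1}] ≤ C + 1 for each j and n ≤ L · card [a,b]. -/

import Mathlib

/-- The interval `[a,b]` associated to a ternary operator `μ`. -/
def cmInterval {X : Type*} (μ : X → X → X → X) (a b : X) : Set X :=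
  {c | ∃ x, c = μ a x b}

/-- The cost `Σ (card [x_{i-1}, x_i] − 1)` of a chain `x₀, x₁, …, x_n`. -/
noncomputable def chainCost {X : Type*} (μ : X → X → X → X) : List X → ℕ
  | [] => 0
  | [_] => 0
  | x :: y :: rest => ((cmInterval μ x y).ncard - 1) + chainCost μ (y :: rest)

/-- `l` is a chain from `a` to `b`: it starts at `a` and ends at `b`. -/
def IsChainFrom {X : Type*} (a b : X) (l : List X) : Prop :=
  l.head? = some a ∧ l.getLast? = some b

/-- All consecutive intervals along the chain `l` are finite. -/
def FiniteIntervalChain {X : Type*} (μ : X → X → X → X) (l : List X) : Prop :=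
  ∀ p ∈ l.zip l.tail, (cmInterval μ p.1 p.2).Finite

/-- The induced metric associated to a ternary operator: the minimum of
`Σ (card [x_{i-1}, x_i] − 1)` over all finite-interval chains from `a`
to `b`. -/
noncomputable def inducedDist {X : Type*} (μ : X → X → X → X) (a b : X) : ℕ :=
  sInf {m : ℕ | ∃ l : List X,
    IsChainFrom a b l ∧ FiniteIntervalChain μ l ∧ chainCost μ l = m}

/-!
Join two points by an edge when their interval has at most `C + 1` points. A chain all of whose
intervals are that small is a path in this graph `G_C`, and such a path has cost at most `C` times
its length.

If the algebra is quasi-geodesic, then a step from `x` to `y ≠ x` of an arbitrary chain costs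
`card [x, y] - 1 ≥ card [x, y] / 2` and can be replaced by at most `L * card [x, y]` edges of `G_C`.
So `d_ν` is bi-Lipschitz equivalent to the graph metric of `G_C`, and graph geodesics, run through
at constant speed in time `d_ν a b`, are quasi-geodesics. Conversely, consecutive points of an
`(L, C)`-quasi-geodesic lie at distance at most `L + C`, and since a step between distinct points
costs at least `1`, a chain realizing that distance is a path of at most `L + C` edges
in `G_{L+C}`.
-/

section GraphMetric

open SimpleGraph

variable {V : Type*} {G : SimpleGraph V} {a b : V}

theorem adj_of_mem_zip_support_tail (p : G.Walk a b) {q : V × V}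
    (hq : q ∈ p.support.zip p.support.tail) : G.Adj q.1 q.2 := by
  induction p with
  | nil => simp at hq
  | cons h p ih =>
    rw [Walk.support_cons, List.tail_cons, ← p.cons_tail_support, List.zip_cons_cons,
      List.mem_cons] at hq
    rcases hq with rfl | hq
    · exact h
    · exact ih (by rwa [← p.cons_tail_support, List.tail_cons])

theorem edist_le_mul_of_edist_succ_le {γ : ℕ → V} {N n : ℕ}
    (h : ∀ k < n, G.edist (γ k) (γ (k + 1)) ≤ N) : G.edist (γ 0) (γ n) ≤ (N * n : ℕ) := by
  induction n with
  | zero => simp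
  | succ n ih =>
    calc G.edist (γ 0) (γ (n + 1))
        ≤ G.edist (γ 0) (γ n) + G.edist (γ n) (γ (n + 1)) := SimpleGraph.edist_triangle
      _ ≤ (N * n : ℕ) + N := add_le_add (ih fun k hk ↦ h k (by omega)) (h n n.lt_succ_self)
      _ = (N * (n + 1) : ℕ) := by push_cast; ring

theorem dist_getVert_of_length_eq_dist {p : G.Walk a b} (hp : p.length = G.dist a b) {i j : ℕ}
    (hij : i ≤ j) (hj : j ≤ p.length) : G.dist (p.getVert i) (p.getVert j) = j - i := by
  have hsub : ((p.drop i).take (j - i)).IsSubwalk p :=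
    (Walk.isSubwalk_take _ _).trans (p.isSubwalk_drop i)
  have hlen := length_eq_dist_of_subwalk hp hsub
  rw [Walk.take_length, Walk.drop_length, Walk.drop_getVert, Nat.add_sub_cancel' hij] at hlen
  omega

theorem cast_dist_getVert_of_length_eq_dist {p : G.Walk a b} (hp : p.length = G.dist a b) {i j : ℕ}
    (hi : i ≤ p.length) (hj : j ≤ p.length) :
    (G.dist (p.getVert i) (p.getVert j) : ℝ) = |(i : ℝ) - j| := by
  wlog hij : i ≤ j generalizing i j
  · rw [G.dist_comm, abs_sub_comm]
    exact this hj hi (by omega)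
  rw [dist_getVert_of_length_eq_dist hp hij hj, Nat.cast_sub hij, abs_sub_comm, abs_of_nonneg]
  exact sub_nonneg.mpr (Nat.cast_le.mpr hij)

theorem abs_natFloor_sub_natFloor_sub_le {R : Type*} [CommRing R] [LinearOrder R]
    [IsStrictOrderedRing R] [FloorSemiring R] {u v : R} (hu : 0 ≤ u) (hv : 0 ≤ v) :
    |((⌊u⌋₊ : R) - ⌊v⌋₊) - (u - v)| ≤ 1 := by
  rw [abs_le]
  constructor <;>
    linarith [Nat.floor_le hu, Nat.floor_le hv, Nat.lt_floor_add_one u, Nat.lt_floor_add_one v]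

theorem abs_dist_getVert_natFloor_sub_le {p : G.Walk a b} (hp : p.length = G.dist a b) {u v : ℝ}
    (hu : u ∈ Set.Icc 0 (p.length : ℝ)) (hv : v ∈ Set.Icc 0 (p.length : ℝ)) :
    abs ((G.dist (p.getVert ⌊u⌋₊) (p.getVert ⌊v⌋₊) : ℝ) - |u - v|) ≤ 1 := by
  rw [cast_dist_getVert_of_length_eq_dist hp (Nat.floor_le_of_le hu.2) (Nat.floor_le_of_le hv.2)]
  exact (abs_abs_sub_abs_le _ _).trans (abs_natFloor_sub_natFloor_sub_le hu.1 hv.1)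

end GraphMetric

section QuasiGeodesicDistance

variable {X : Type*}

/-- Quasi-geodesicity of an integer-valued distance function; the quasi-geodesics are parametrized
by the integer times `0, …, d a b`. -/
def IsQuasiGeodesicDist (d : X → X → ℕ) : Prop :=
  ∃ L C : ℝ, 0 < L ∧ 0 < C ∧ ∀ a b : X, ∃ γ : ℕ → X,
    γ 0 = a ∧ γ (d a b) = b ∧
    ∀ s t : ℕ, s ≤ d a b → t ≤ d a b →
      L⁻¹ * |(s : ℝ) - (t : ℝ)| - C ≤ (d (γ s) (γ t) : ℝ) ∧
      (d (γ s) (γ t) : ℝ) ≤ L * |(s : ℝ) - (t : ℝ)| + C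

theorem exists_mul_eq_of_le_mul {K : Type*} [Field K] [LinearOrder K] [IsStrictOrderedRing K]
    {M m n : K} (hM : 1 ≤ M) (hm : 0 ≤ m) (hn : 0 ≤ n) (hnm : n ≤ M * m) (hmn : m ≤ M * n) :
    ∃ r, M⁻¹ ≤ r ∧ r ≤ M ∧ r * m = n := by
  have hM₀ : 0 < M := one_pos.trans_le hM
  rcases hm.eq_or_lt with rfl | hm
  · exact ⟨1, inv_le_one_of_one_le₀ hM, hM, by linarith⟩
  · refine ⟨n / m, ?_, (div_le_iff₀ hm).mpr hnm, div_mul_cancel₀ n hm.ne'⟩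
    rwa [le_div_iff₀ hm, inv_mul_le_iff₀ hM₀]

theorem isQuasiGeodesicDist_of_dist_le_mul {d : X → X → ℕ} {G : SimpleGraph X}
    (hG : G.Preconnected) {M : ℝ} (hM : 1 ≤ M) (hGd : ∀ x y, (G.dist x y : ℝ) ≤ M * d x y)
    (hdG : ∀ x y, (d x y : ℝ) ≤ M * G.dist x y) : IsQuasiGeodesicDist d := by
  have hM₀ : 0 < M := one_pos.trans_le hM
  refine ⟨M * M, M, by positivity, hM₀, fun a b ↦ ?_⟩
  obtain ⟨p, hp⟩ := (hG a b).exists_walk_length_eq_dist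
  -- `r` is the constant speed at which `p` is traversed in time `d a b`.
  obtain ⟨r, hMr, hrM, hr⟩ : ∃ r, M⁻¹ ≤ r ∧ r ≤ M ∧ r * d a b = p.length :=
    exists_mul_eq_of_le_mul hM (by positivity) (by positivity) (hp ▸ hGd a b) (hp ▸ hdG a b)
  have hr₀ : 0 ≤ r := (inv_pos.mpr hM₀).le.trans hMr
  have hmem (s : ℕ) (hs : s ≤ d a b) : r * s ∈ Set.Icc 0 (p.length : ℝ) :=
    ⟨by positivity, hr ▸ by gcongr⟩
  refine ⟨fun s ↦ p.getVert ⌊r * s⌋₊, by simp, by simp [hr], fun s t hs ht ↦ ?_⟩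
  have hdist := abs_dist_getVert_natFloor_sub_le hp (hmem s hs) (hmem t ht)
  rw [← mul_sub, abs_mul, abs_of_nonneg hr₀, abs_le] at hdist
  beta_reduce
  set x := p.getVert ⌊r * s⌋₊
  set y := p.getVert ⌊r * t⌋₊
  constructor
  · calc (M * M)⁻¹ * |(s : ℝ) - t| - M
        ≤ M⁻¹ * (M⁻¹ * |(s : ℝ) - t|) - M⁻¹ := by
          rw [mul_inv, mul_assoc]
          linarith [inv_le_one_of_one_le₀ hM]
      _ = M⁻¹ * (M⁻¹ * |(s : ℝ) - t| - 1) := by ring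
      _ ≤ M⁻¹ * (r * |(s : ℝ) - t| - 1) := by gcongr
      _ ≤ M⁻¹ * G.dist x y := by gcongr; linarith
      _ ≤ d x y := (inv_mul_le_iff₀ hM₀).mpr (hGd x y)
  · calc (d x y : ℝ)
        ≤ M * G.dist x y := hdG x y
      _ ≤ M * (r * |(s : ℝ) - t| + 1) := by gcongr; linarith
      _ ≤ M * (M * |(s : ℝ) - t| + 1) := by gcongr
      _ = M * M * |(s : ℝ) - t| + M := by ring

end QuasiGeodesicDistance

section Chains

variable {X : Type*} {ν : X → X → X → X} {a b : X} {l : List X}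

theorem IsChainFrom.ne_nil (hl : IsChainFrom a b l) : l ≠ [] := by
  rintro rfl
  simp [IsChainFrom] at hl

theorem isChainFrom_cons_cons {x y : X} :
    IsChainFrom a b (x :: y :: l) ↔ x = a ∧ IsChainFrom y b (y :: l) := by
  simp [IsChainFrom]

theorem isChainFrom_support {G : SimpleGraph X} (p : G.Walk a b) : IsChainFrom a b p.support := by
  constructor
  · rw [List.head?_eq_some_head p.support_ne_nil, p.head_support]
  · rw [List.getLast?_eq_some_getLast p.support_ne_nil, p.getLast_support]

theorem chainCost_eq_sum_map :
    chainCost ν l = ((l.zip l.tail).map fun p ↦ (cmInterval ν p.1 p.2).ncard - 1).sum := by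
  induction l with
  | nil => rfl
  | cons x l ih =>
    cases l with
    | nil => rfl
    | cons y l => rw [chainCost, ih]; simp

theorem cast_chainCost_eq_sum_map {R : Type*} [AddMonoidWithOne R] :
    (chainCost ν l : R) =
      ((l.zip l.tail).map fun p ↦ (((cmInterval ν p.1 p.2).ncard - 1 : ℕ) : R)).sum := by
  simp [chainCost_eq_sum_map, Function.comp_def]

theorem IsChainFrom.le_sum_map_add {M : Type*} [AddMonoid M] [Preorder M] [AddLeftMono M]
    {φ : X → M} {w : X × X → M} (hl : IsChainFrom a b l)
    (hφ : ∀ p ∈ l.zip l.tail, φ p.1 ≤ w p + φ p.2) :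
    φ a ≤ ((l.zip l.tail).map w).sum + φ b := by
  induction l generalizing a with
  | nil => exact absurd rfl hl.ne_nil
  | cons x l ih =>
    cases l with
    | nil =>
      obtain ⟨rfl, rfl⟩ : x = a ∧ x = b := by simpa [IsChainFrom] using hl
      simp
    | cons y l =>
      obtain ⟨rfl, hy⟩ := isChainFrom_cons_cons.mp hl
      calc φ x ≤ w (x, y) + φ y := hφ (x, y) (by simp)
        _ ≤ w (x, y) + ((((y :: l).zip l).map w).sum + φ b) := by
          gcongr
          exact ih hy fun p hp ↦ hφ p (List.mem_cons_of_mem _ hp)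
        _ = _ := by simp [add_assoc]

end Chains

section InducedDistance

variable {X : Type*} {ν : X → X → X → X} {a b c : X} {l : List X}

theorem left_mem_cmInterval (T1 : ∀ a x : X, ν a a x = a) (a b : X) : a ∈ cmInterval ν a b :=
  ⟨a, (T1 a b).symm⟩

theorem cmInterval_comm (T2 : ∀ a x b : X, ν a x b = ν b x a) (a b : X) :
    cmInterval ν a b = cmInterval ν b a := by
  simp only [cmInterval, T2 a _ b]

theorem two_le_ncard_cmInterval (ha : a ∈ cmInterval ν a b) (hb : b ∈ cmInterval ν a b)
    (hab : a ≠ b) (hfin : (cmInterval ν a b).Finite) : 2 ≤ (cmInterval ν a b).ncard := by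
  rw [← Set.ncard_pair hab]
  exact Set.ncard_le_ncard (Set.pair_subset ha hb) hfin

theorem inducedDist_le_chainCost (hl : IsChainFrom a b l) (hfin : FiniteIntervalChain ν l) :
    inducedDist ν a b ≤ chainCost ν l :=
  Nat.sInf_le ⟨l, hl, hfin, rfl⟩

theorem inducedDist_self : inducedDist ν a a = 0 :=
  Nat.le_zero.mp <| inducedDist_le_chainCost (l := [a]) ⟨rfl, rfl⟩ (by simp [FiniteIntervalChain])

theorem inducedDist_le_ncard_sub_one (hfin : (cmInterval ν a b).Finite) :
    inducedDist ν a b ≤ (cmInterval ν a b).ncard - 1 :=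
  inducedDist_le_chainCost (l := [a, b]) ⟨rfl, rfl⟩ (by simpa [FiniteIntervalChain] using hfin)

theorem exists_chainCost_eq_inducedDist
    (h : ∃ l : List X, IsChainFrom a b l ∧ FiniteIntervalChain ν l) :
    ∃ l, IsChainFrom a b l ∧ FiniteIntervalChain ν l ∧ chainCost ν l = inducedDist ν a b := by
  obtain ⟨l, hl, hfin⟩ := h
  exact Nat.sInf_mem (s := {m | ∃ l, IsChainFrom a b l ∧ FiniteIntervalChain ν l ∧
    chainCost ν l = m}) ⟨_, l, hl, hfin, rfl⟩

theorem inducedDist_le_ncard_sub_one_add (hfin : (cmInterval ν a b).Finite)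
    (h : ∃ l : List X, IsChainFrom b c l ∧ FiniteIntervalChain ν l) :
    inducedDist ν a c ≤ ((cmInterval ν a b).ncard - 1) + inducedDist ν b c := by
  obtain ⟨l, hl, hl_fin, hcost⟩ := exists_chainCost_eq_inducedDist h
  cases l with
  | nil => exact absurd rfl hl.ne_nil
  | cons y l =>
    obtain rfl : y = b := by simpa using hl.1
    rw [← hcost]
    exact inducedDist_le_chainCost (isChainFrom_cons_cons.mpr ⟨rfl, hl⟩)
      (List.forall_mem_cons.mpr ⟨hfin, hl_fin⟩)

theorem le_mul_inducedDist_add {φ : X → ℝ} {K : ℝ}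
    (h : ∃ l : List X, IsChainFrom a b l ∧ FiniteIntervalChain ν l)
    (hφ : ∀ x y, (cmInterval ν x y).Finite →
      φ x ≤ K * ((cmInterval ν x y).ncard - 1 : ℕ) + φ y) :
    φ a ≤ K * inducedDist ν a b + φ b := by
  obtain ⟨l, hl, hfin, hcost⟩ := exists_chainCost_eq_inducedDist h
  have hsum := hl.le_sum_map_add fun p hp ↦ hφ p.1 p.2 (hfin p hp)
  rwa [List.sum_map_mul_left, ← cast_chainCost_eq_sum_map, hcost] at hsum

theorem dist_le_mul_inducedDist {G : SimpleGraph X} (hG : G.Preconnected) {K : ℝ}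
    (h : ∃ l : List X, IsChainFrom a b l ∧ FiniteIntervalChain ν l)
    (hK : ∀ x y, (cmInterval ν x y).Finite →
      (G.dist x y : ℝ) ≤ K * ((cmInterval ν x y).ncard - 1 : ℕ)) :
    (G.dist a b : ℝ) ≤ K * inducedDist ν a b := by
  have hle := le_mul_inducedDist_add (φ := fun x ↦ (G.dist x b : ℝ)) h fun x y hfin ↦
    calc (G.dist x b : ℝ) ≤ G.dist x y + G.dist y b := mod_cast (hG x y).dist_triangle_left b
      _ ≤ _ := by gcongr; exact hK x y hfin
  simpa only [SimpleGraph.dist_self, Nat.cast_zero, add_zero] using hle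

end InducedDistance

section BoundedIntervalGraph

variable {X : Type*} {ν : X → X → X → X} {C : ℝ} {a b : X} {l : List X}

/-- The graph on `X` in which distinct points are adjacent when their interval is finite with at
most `C + 1` points, so that a step along an edge has cost at most `C`. It is built with
`SimpleGraph.fromRel` to be available without a symmetry assumption on `ν`. -/
def boundedIntervalGraph (ν : X → X → X → X) (C : ℝ) : SimpleGraph X :=
  .fromRel fun x y ↦ (cmInterval ν x y).Finite ∧ ((cmInterval ν x y).ncard : ℝ) ≤ C + 1

theorem boundedIntervalGraph_adj (hcomm : ∀ x y, cmInterval ν x y = cmInterval ν y x) :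
    (boundedIntervalGraph ν C).Adj a b ↔
      a ≠ b ∧ (cmInterval ν a b).Finite ∧ ((cmInterval ν a b).ncard : ℝ) ≤ C + 1 := by
  rw [boundedIntervalGraph, SimpleGraph.fromRel_adj, hcomm b a, or_self]

theorem edist_boundedIntervalGraph_le_one (hfin : (cmInterval ν a b).Finite)
    (hcard : ((cmInterval ν a b).ncard : ℝ) ≤ C + 1) :
    (boundedIntervalGraph ν C).edist a b ≤ 1 := by
  rw [SimpleGraph.edist_le_one_iff_adj_or_eq, or_iff_not_imp_right]
  exact fun hab ↦ (SimpleGraph.fromRel_adj _ _ _).mpr ⟨hab, .inl ⟨hfin, hcard⟩⟩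

theorem edist_boundedIntervalGraph_add_one_le_length (hl : IsChainFrom a b l)
    (hbdd : ∀ p ∈ l.zip l.tail, (cmInterval ν p.1 p.2).Finite ∧
      ((cmInterval ν p.1 p.2).ncard : ℝ) ≤ C + 1) :
    (boundedIntervalGraph ν C).edist a b + 1 ≤ l.length := by
  have hsum := hl.le_sum_map_add (φ := ((boundedIntervalGraph ν C).edist · b)) (w := fun _ ↦ 1)
    fun p hp ↦ SimpleGraph.edist_triangle.trans <| by
      gcongr
      exact edist_boundedIntervalGraph_le_one (hbdd p hp).1 (hbdd p hp).2
  have hlen : 1 ≤ l.length := List.length_pos_iff.mpr hl.ne_nil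
  calc (boundedIntervalGraph ν C).edist a b + 1
      ≤ ((l.length - 1 : ℕ) : ℕ∞) + 1 := by gcongr; simpa using hsum
    _ = l.length := by exact_mod_cast Nat.sub_add_cancel hlen

theorem reachable_boundedIntervalGraph (hl : IsChainFrom a b l)
    (hbdd : ∀ p ∈ l.zip l.tail, (cmInterval ν p.1 p.2).Finite ∧
      ((cmInterval ν p.1 p.2).ncard : ℝ) ≤ C + 1) :
    (boundedIntervalGraph ν C).Reachable a b :=
  SimpleGraph.reachable_of_edist_ne_top <| ne_top_of_le_ne_top (ENat.natCast_ne_top _) <|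
    le_self_add.trans (edist_boundedIntervalGraph_add_one_le_length hl hbdd)

theorem dist_boundedIntervalGraph_le_mul_ncard_sub_one (ha : a ∈ cmInterval ν a b)
    (hb : b ∈ cmInterval ν a b) (hfin : (cmInterval ν a b).Finite) {L : ℝ} (hL : 0 ≤ L)
    (hl : IsChainFrom a b l)
    (hbdd : ∀ p ∈ l.zip l.tail, (cmInterval ν p.1 p.2).Finite ∧
      ((cmInterval ν p.1 p.2).ncard : ℝ) ≤ C + 1)
    (hlen : (l.length : ℝ) - 1 ≤ L * (cmInterval ν a b).ncard) :
    ((boundedIntervalGraph ν C).dist a b : ℝ) ≤ 2 * L * ((cmInterval ν a b).ncard - 1 : ℕ) := by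
  rcases eq_or_ne a b with rfl | hab
  · rw [SimpleGraph.dist_self, Nat.cast_zero]
    positivity
  have hdist : ((boundedIntervalGraph ν C).dist a b : ℝ) + 1 ≤ l.length := by
    have hedist := edist_boundedIntervalGraph_add_one_le_length hl hbdd
    rw [← (reachable_boundedIntervalGraph hl hbdd).coe_dist_eq_edist] at hedist
    exact_mod_cast hedist
  have htwo : (2 : ℝ) ≤ (cmInterval ν a b).ncard := mod_cast two_le_ncard_cmInterval ha hb hab hfin
  have hpos : 0 < (cmInterval ν a b).ncard := (Set.ncard_pos hfin).mpr ⟨a, ha⟩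
  calc ((boundedIntervalGraph ν C).dist a b : ℝ)
      ≤ L * (cmInterval ν a b).ncard := by linarith
    _ ≤ L * (2 * ((cmInterval ν a b).ncard - 1)) := by gcongr; linarith
    _ = 2 * L * ((cmInterval ν a b).ncard - 1 : ℕ) := by rw [Nat.cast_pred hpos]; ring

theorem edist_boundedIntervalGraph_le_ncard_sub_one (ha : a ∈ cmInterval ν a b)
    (hb : b ∈ cmInterval ν a b) (hfin : (cmInterval ν a b).Finite)
    (hC : (((cmInterval ν a b).ncard - 1 : ℕ) : ℝ) ≤ C) :
    (boundedIntervalGraph ν C).edist a b ≤ ((cmInterval ν a b).ncard - 1 : ℕ) := by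
  rcases eq_or_ne a b with rfl | hab
  · simp
  · have htwo := two_le_ncard_cmInterval ha hb hab hfin
    rw [Nat.cast_pred (by omega)] at hC
    calc (boundedIntervalGraph ν C).edist a b
        ≤ 1 := edist_boundedIntervalGraph_le_one hfin (by linarith)
      _ ≤ ((cmInterval ν a b).ncard - 1 : ℕ) := by exact_mod_cast Nat.le_sub_one_of_lt htwo

theorem edist_boundedIntervalGraph_le_inducedDist (hleft : ∀ x y, x ∈ cmInterval ν x y)
    (hcomm : ∀ x y, cmInterval ν x y = cmInterval ν y x)
    (h : ∃ l : List X, IsChainFrom a b l ∧ FiniteIntervalChain ν l)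
    (hC : (inducedDist ν a b : ℝ) ≤ C) :
    (boundedIntervalGraph ν C).edist a b ≤ inducedDist ν a b := by
  obtain ⟨l, hl, hfin, hcost⟩ := exists_chainCost_eq_inducedDist h
  have hstep (p : X × X) (hp : p ∈ l.zip l.tail) :
      (boundedIntervalGraph ν C).edist p.1 p.2 ≤ ((cmInterval ν p.1 p.2).ncard - 1 : ℕ) := by
    have hle : (cmInterval ν p.1 p.2).ncard - 1 ≤ inducedDist ν a b := by
      rw [← hcost, chainCost_eq_sum_map]
      exact List.le_sum_of_mem (List.mem_map_of_mem hp)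
    exact edist_boundedIntervalGraph_le_ncard_sub_one (hleft _ _) (hcomm p.1 p.2 ▸ hleft _ _)
      (hfin p hp) ((Nat.cast_le.mpr hle).trans hC)
  have hsum := hl.le_sum_map_add (φ := ((boundedIntervalGraph ν C).edist · b))
    fun p hp ↦ SimpleGraph.edist_triangle.trans (add_le_add_left (hstep p hp) _)
  rwa [← cast_chainCost_eq_sum_map, hcost, SimpleGraph.edist_self, add_zero] at hsum

theorem inducedDist_le_mul_length (hcomm : ∀ x y, cmInterval ν x y = cmInterval ν y x)
    (ficc : ∀ x y : X, ∃ l : List X, IsChainFrom x y l ∧ FiniteIntervalChain ν l)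
    (p : (boundedIntervalGraph ν C).Walk a b) : (inducedDist ν a b : ℝ) ≤ C * p.length := by
  induction p with
  | nil => simp [inducedDist_self]
  | @cons x y z hadj p ih =>
    obtain ⟨-, hfin, hcard⟩ := (boundedIntervalGraph_adj hcomm).mp hadj
    have hstep : (inducedDist ν x z : ℝ) ≤
        ((cmInterval ν x y).ncard - 1 : ℕ) + inducedDist ν y z :=
      mod_cast inducedDist_le_ncard_sub_one_add hfin (ficc y z)
    have hcost : (((cmInterval ν x y).ncard - 1 : ℕ) : ℝ) ≤ C := by
      rw [Nat.cast_pred ((Set.ncard_pos hfin).mpr ⟨_, x, rfl⟩)]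
      linarith
    rw [SimpleGraph.Walk.length_cons, Nat.cast_succ]
    linarith

end BoundedIntervalGraph

section QuasiGeodesicAlgebra

variable {X : Type*} {ν : X → X → X → X}

/-- Quasi-geodesicity of a ternary algebra: any two points are joined by a chain of small intervals
with at most `L * card [a, b]` steps. The number of steps of a chain `l` is `l.length - 1`, and
for an infinite interval `[a, b]` there is no bound on it. -/
def IsQuasiGeodesicAlgebra (ν : X → X → X → X) : Prop :=
  ∃ L C : ℝ, 0 < L ∧ 0 < C ∧ ∀ a b : X, ∃ l : List X,
    IsChainFrom a b l ∧
    (∀ p ∈ l.zip l.tail, (cmInterval ν p.1 p.2).Finite ∧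
      ((cmInterval ν p.1 p.2).ncard : ℝ) ≤ C + 1) ∧
    ((cmInterval ν a b).Infinite ∨
      ((l.length : ℝ) - 1 ≤ L * ((cmInterval ν a b).ncard : ℝ)))

theorem IsQuasiGeodesicDist.isQuasiGeodesicAlgebra (hleft : ∀ x y, x ∈ cmInterval ν x y)
    (hcomm : ∀ x y, cmInterval ν x y = cmInterval ν y x)
    (ficc : ∀ x y : X, ∃ l : List X, IsChainFrom x y l ∧ FiniteIntervalChain ν l)
    (h : IsQuasiGeodesicDist (inducedDist ν)) : IsQuasiGeodesicAlgebra ν := by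
  obtain ⟨L, C, hL, hC, h⟩ := h
  refine ⟨L + C, L + C, by positivity, by positivity, fun a b ↦ ?_⟩
  obtain ⟨γ, rfl, hγb, hγ⟩ := h a b
  set n := inducedDist ν (γ 0) b
  have hstep (k : ℕ) (hk : k < n) :
      (boundedIntervalGraph ν (L + C)).edist (γ k) (γ (k + 1)) ≤ ⌊L + C⌋₊ := by
    have hdist : (inducedDist ν (γ k) (γ (k + 1)) : ℝ) ≤ L + C := by
      simpa using (hγ k (k + 1) hk.le hk).2
    exact (edist_boundedIntervalGraph_le_inducedDist hleft hcomm (ficc _ _) hdist).trans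
      (mod_cast Nat.le_floor hdist)
  have hedist := edist_le_mul_of_edist_succ_le hstep
  rw [hγb] at hedist
  obtain ⟨p, hp⟩ := SimpleGraph.exists_walk_of_edist_ne_top <|
    ne_top_of_le_ne_top (ENat.natCast_ne_top _) hedist
  rw [← hp, Nat.cast_le] at hedist
  refine ⟨p.support, isChainFrom_support p, fun q hq ↦
    ((boundedIntervalGraph_adj hcomm).mp (adj_of_mem_zip_support_tail p hq)).2,
    or_iff_not_imp_left.mpr fun hfin ↦ ?_⟩
  calc (p.support.length : ℝ) - 1 = p.length := by simp
    _ ≤ ⌊L + C⌋₊ * n := mod_cast hedist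
    _ ≤ (L + C) * (cmInterval ν (γ 0) b).ncard := by
      gcongr
      · exact Nat.floor_le (by positivity)
      · exact (inducedDist_le_ncard_sub_one (Set.not_infinite.mp hfin)).trans (Nat.sub_le _ _)

theorem IsQuasiGeodesicAlgebra.isQuasiGeodesicDist (hleft : ∀ x y, x ∈ cmInterval ν x y)
    (hcomm : ∀ x y, cmInterval ν x y = cmInterval ν y x) (h : IsQuasiGeodesicAlgebra ν) :
    IsQuasiGeodesicDist (inducedDist ν) := by
  obtain ⟨L, C, hL, hC, h⟩ := h
  set G := boundedIntervalGraph ν C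
  have hreach (x y : X) : G.Reachable x y := by
    obtain ⟨l, hl, hbdd, -⟩ := h x y
    exact reachable_boundedIntervalGraph hl hbdd
  have ficc (x y : X) : ∃ l : List X, IsChainFrom x y l ∧ FiniteIntervalChain ν l := by
    obtain ⟨l, hl, hbdd, -⟩ := h x y
    exact ⟨l, hl, fun p hp ↦ (hbdd p hp).1⟩
  have hinterval (x y : X) (hfin : (cmInterval ν x y).Finite) :
      (G.dist x y : ℝ) ≤ 2 * L * ((cmInterval ν x y).ncard - 1 : ℕ) := by
    obtain ⟨l, hl, hbdd, hinf | hlen⟩ := h x y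
    · exact absurd hfin hinf
    · exact dist_boundedIntervalGraph_le_mul_ncard_sub_one (hleft x y) (hcomm x y ▸ hleft y x) hfin
        hL.le hl hbdd hlen
  refine isQuasiGeodesicDist_of_dist_le_mul hreach (M := 1 + 2 * L + C) (by linarith)
    (fun x y ↦ ?_) fun x y ↦ ?_
  · calc (G.dist x y : ℝ) ≤ 2 * L * inducedDist ν x y :=
        dist_le_mul_inducedDist hreach (ficc x y) hinterval
      _ ≤ (1 + 2 * L + C) * inducedDist ν x y := by gcongr; linarith
  · obtain ⟨p, hp⟩ := (hreach x y).exists_walk_length_eq_dist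
    calc (inducedDist ν x y : ℝ) ≤ C * G.dist x y :=
        hp ▸ inducedDist_le_mul_length hcomm ficc p
      _ ≤ (1 + 2 * L + C) * G.dist x y := by gcongr; linarith

theorem stmt19_general (hleft : ∀ x y, x ∈ cmInterval ν x y)
    (hcomm : ∀ x y, cmInterval ν x y = cmInterval ν y x)
    (ficc : ∀ x y : X, ∃ l : List X, IsChainFrom x y l ∧ FiniteIntervalChain ν l) :
    IsQuasiGeodesicDist (inducedDist ν) ↔ IsQuasiGeodesicAlgebra ν :=
  ⟨fun h ↦ h.isQuasiGeodesicAlgebra hleft hcomm ficc, fun h ↦ h.isQuasiGeodesicDist hleft hcomm⟩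

end QuasiGeodesicAlgebra

/-- for a ternary algebra satisfying (T1), (T2) and the finite
interval chain condition, the induced metric `d_ν` is quasi-geodesic (in the
integer-valued sense) if and only if the ternary algebra is quasi-geodesic:
there are `L, C > 0` such that any `a, b` are joined by a chain of `n ≤
L·card [a,b]` steps whose consecutive intervals have at most `C+1` points. -/
theorem stmt19 {X : Type*} (ν : X → X → X → X)
    (T1 : ∀ a x : X, ν a a x = a ∧ ν a x a = a)
    (T2 : ∀ a x b : X, ν a x b = ν b x a)
    -- finite interval chain condition:
    (ficc : ∀ a b : X, ∃ l : List X, IsChainFrom a b l ∧ FiniteIntervalChain ν l) :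
    -- the induced metric d_ν is quasi-geodesic:
    (∃ L C : ℝ, 0 < L ∧ 0 < C ∧ ∀ a b : X, ∃ γ : ℕ → X,
      γ 0 = a ∧ γ (inducedDist ν a b) = b ∧
      ∀ s t : ℕ, s ≤ inducedDist ν a b → t ≤ inducedDist ν a b →
        L⁻¹ * |(s : ℝ) - (t : ℝ)| - C ≤ (inducedDist ν (γ s) (γ t) : ℝ) ∧
        (inducedDist ν (γ s) (γ t) : ℝ) ≤ L * |(s : ℝ) - (t : ℝ)| + C) ↔
    -- the ternary algebra (X,ν) is quasi-geodesic:
    (∃ L C : ℝ, 0 < L ∧ 0 < C ∧ ∀ a b : X, ∃ l : List X,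
      IsChainFrom a b l ∧
      (∀ p ∈ l.zip l.tail, (cmInterval ν p.1 p.2).Finite ∧
        ((cmInterval ν p.1 p.2).ncard : ℝ) ≤ C + 1) ∧
      ((cmInterval ν a b).Infinite ∨
        ((l.length : ℝ) - 1 ≤ L * ((cmInterval ν a b).ncard : ℝ)))) :=
  stmt19_general (left_mem_cmInterval fun a x ↦ (T1 a x).1) (cmInterval_comm T2) ficc
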